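/- For i, j, k ∈ {1,…,n} with i ≠ n, j ∉ {i, i+1}, and k ∉ {j, i, i+1}, the following identities of operators on L hold: T_i·e_{i,i+1}·T_i = e_{i+1,i} + (τ^{−1}−τ)(q−q^{−1})^{−1}·(T^{−1})^+_{i+1,n−1}·(Y_n − Y_n^{−1})·T^-_{n−1,i}; T_i·e_{ij}·T_i = e_{i+1,j}; T_i·e_{j,i+1}·T_i = e_{ji}; and e_{jk}·T_i = T_i·e_{jk}. -/

import Mathlib

noncomputable section

/-- The Laurent polynomial ring `R[X₁^{±1}, …, Xₙ^{±1}]` in `n` variables over `R`,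
realised as the monoid algebra of the additive monoid `Fin n →₀ ℤ` of exponent vectors. -/
abbrev Laur (R : Type*) [CommRing R] (n : ℕ) : Type _ :=
  AddMonoidAlgebra R (Fin n →₀ ℤ)

variable {R : Type*} [CommRing R] {n : ℕ}

/-- The monomial `c · X^a`. -/
def mono (a : Fin n →₀ ℤ) (c : R) : Laur R n := AddMonoidAlgebra.single a c

/-- The generator `X_i`. -/
def Xel (i : Fin n) : Laur R n := mono (Finsupp.single i 1) 1

/-- The element `X_i⁻¹`. -/
def XinvEl (i : Fin n) : Laur R n := mono (Finsupp.single i (-1)) 1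

/-- Multiplication by a Laurent polynomial, as a linear endomorphism. -/
def mulOp (x : Laur R n) : Module.End R (Laur R n) := LinearMap.mulLeft R x

/-- The operator of multiplication by `X_i`, with `ℕ`-indexing (`0`-based; junk value `1`
out of range). -/
def XOp (i : ℕ) : Module.End R (Laur R n) :=
  if h : i < n then mulOp (Xel ⟨i, h⟩) else 1

/-- The operator of multiplication by `X_i⁻¹`, with `ℕ`-indexing. -/
def XinvOp (i : ℕ) : Module.End R (Laur R n) :=
  if h : i < n then mulOp (XinvEl ⟨i, h⟩) else 1

/-- Ascending product `f s * f (s+1) * ⋯ * f (s+len-1)` (equal to `1` when `len = 0`). -/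
def aF {M : Type*} [Monoid M] (f : ℕ → M) (s len : ℕ) : M :=
  ((List.range' s len).map f).prod

/-- Descending product `f (s+len-1) * ⋯ * f (s+1) * f s` (equal to `1` when `len = 0`). -/
def dF {M : Type*} [Monoid M] (f : ℕ → M) (s len : ℕ) : M :=
  (((List.range' s len).map f).reverse).prod

/-- Integer power `u^z`, where `v` is a designated (two-sided) inverse of `u`. -/
def zpowOp {M : Type*} [Monoid M] (u v : M) (z : ℤ) : M :=
  if 0 ≤ z then u ^ z.toNat else v ^ (-z).toNat

/-!
All the operators `D_i` are conjugates `T_i ⋯ T_{n-1} D_n T_{n-1} ⋯ T_i` of `D_n`, so the four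
identities follow formally from the braid relations, from `T_k X_k T_k = X_{k+1}`, and from the
fact that `T_k` commutes with the `X_j` for `j ≠ k, k+1` and, when `k < n - 1`, with `D_n`. The
last fact amounts to commutation with `Y_n = π⁻¹ T_1⁻¹ ⋯ T_{n-1}⁻¹`, and holds because `π⁻¹`
intertwines `T_{k+1}` with `T_k` while the product of the inverses intertwines `T_k` with
`T_{k+1}`. The relations between the `T_k` and the `X_j` are checked by clearing the denominators
`X_{k+1} - X_k`, which are regular elements over any coefficient ring.
-/

lemma commute_of_mul_eq_one {M : Type*} [Monoid M] {x y z : M} (h : Commute x y) (hyz : y * z = 1)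
    (hzy : z * y = 1) : Commute x z :=
  Commute.units_inv_right (u := ⟨y, z, hyz, hzy⟩) h

section OrderedProducts

variable {M : Type*} [Monoid M]

lemma aF_succ (f : ℕ → M) (s len : ℕ) : aF f s (len + 1) = f s * aF f (s + 1) len := by
  simp [aF, List.range'_succ]

lemma dF_succ (f : ℕ → M) (s len : ℕ) : dF f s (len + 1) = dF f (s + 1) len * f s := by
  simp [dF, List.range'_succ]

lemma unop_aF_op (f : ℕ → M) (s len : ℕ) :
    (aF (fun l ↦ MulOpposite.op (f l)) s len).unop = dF f s len := by
  simp [aF, dF, MulOpposite.unop_list_prod, Function.comp_def]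

lemma commute_aF {f : ℕ → M} {x : M} {s len : ℕ}
    (h : ∀ l, s ≤ l → l < s + len → Commute x (f l)) : Commute x (aF f s len) := by
  refine Commute.list_prod_right _ _ fun y hy ↦ ?_
  obtain ⟨l, hl, rfl⟩ := List.mem_map.1 hy
  rw [List.mem_range'_1] at hl
  exact h l hl.1 hl.2

lemma commute_dF {f : ℕ → M} {x : M} {s len : ℕ}
    (h : ∀ l, s ≤ l → l < s + len → Commute x (f l)) : Commute x (dF f s len) := by
  rw [← unop_aF_op]
  exact (commute_aF fun l hs hl ↦ (h l hs hl).op).unop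

lemma aF_mul_dF_eq_one {f g : ℕ → M} {s len : ℕ}
    (h : ∀ l, s ≤ l → l < s + len → g l * f l = 1) : aF g s len * dF f s len = 1 := by
  induction len generalizing s with
  | zero => simp [aF, dF]
  | succ m ih =>
    rw [aF_succ, dF_succ, mul_assoc, ← mul_assoc (aF g _ _),
      ih fun l hs hl ↦ h l (by omega) (by omega), one_mul, h s le_rfl (by omega)]

lemma dF_mul_aF_eq_one {f g : ℕ → M} {s len : ℕ}
    (h : ∀ l, s ≤ l → l < s + len → f l * g l = 1) : dF f s len * aF g s len = 1 := by
  induction len generalizing s with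
  | zero => simp [aF, dF]
  | succ m ih =>
    rw [aF_succ, dF_succ, mul_assoc, ← mul_assoc (f s), h s le_rfl (by omega), one_mul,
      ih fun l hs hl ↦ h l (by omega) (by omega)]

end OrderedProducts

section BraidSequences

variable {M : Type*} [Monoid M] {T Ti X : ℕ → M} {N i : ℕ}

/-- The elements `T 0, …, T (N - 1)` satisfy the relations of the Artin braid group on `N + 1`
strands. -/
structure IsBraidSequence (T : ℕ → M) (N : ℕ) : Prop where
  braid : ∀ l, l + 1 < N → T l * T (l + 1) * T l = T (l + 1) * T l * T (l + 1)
  commute_of_lt : ∀ l m, l + 1 < m → m < N → Commute (T l) (T m)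

namespace IsBraidSequence

lemma commute (hT : IsBraidSequence T N) {l m : ℕ} (hl : l < N) (hm : m < N)
    (h : l + 1 < m ∨ m + 1 < l) : Commute (T l) (T m) :=
  h.elim (fun h ↦ hT.commute_of_lt l m h hm) fun h ↦ (hT.commute_of_lt m l h hl).symm

lemma op (hT : IsBraidSequence T N) : IsBraidSequence (fun l ↦ MulOpposite.op (T l)) N where
  braid l hl := MulOpposite.unop_injective (by simpa [mul_assoc] using hT.braid l hl)
  commute_of_lt l m hlm hm := (hT.commute_of_lt l m hlm hm).op

lemma semiconjBy_aF (hT : IsBraidSequence T N) {s len : ℕ} (hs : s ≤ i) (hi : i + 1 < s + len)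
    (hN : s + len ≤ N) : SemiconjBy (aF T s len) (T i) (T (i + 1)) := by
  induction len generalizing s with
  | zero => omega
  | succ m ih =>
    rcases hs.eq_or_lt with rfl | hlt
    · obtain ⟨k, rfl⟩ : ∃ k, m = k + 1 := ⟨m - 1, by omega⟩
      have hbraid : SemiconjBy (T s * T (s + 1)) (T s) (T (s + 1)) := by
        rw [SemiconjBy, hT.braid s (by omega), mul_assoc]
      have hcomm : Commute (T s) (aF T (s + 1 + 1) k) :=
        commute_aF fun l hl _ ↦ hT.commute (by omega) (by omega) (by omega)
      rw [aF_succ, aF_succ, ← mul_assoc]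
      exact hbraid.mul_left hcomm.symm
    · rw [aF_succ]
      exact SemiconjBy.mul_left (hT.commute (by omega) (by omega) (by omega))
        (ih hlt (by omega) (by omega))

lemma semiconjBy_dF (hT : IsBraidSequence T N) {s len : ℕ} (hs : s ≤ i) (hi : i + 1 < s + len)
    (hN : s + len ≤ N) : SemiconjBy (dF T s len) (T (i + 1)) (T i) := by
  rw [← unop_aF_op]
  exact (hT.op.semiconjBy_aF hs hi hN).unop

lemma semiconjBy_aF_inverse (hT : IsBraidSequence T N) (hTTi : ∀ k < N, T k * Ti k = 1)
    (hTiT : ∀ k < N, Ti k * T k = 1) {s len : ℕ} (hs : s ≤ i) (hi : i + 1 < s + len)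
    (hN : s + len ≤ N) : SemiconjBy (aF Ti s len) (T i) (T (i + 1)) := by
  let u : Mˣ := ⟨dF T s len, aF Ti s len, dF_mul_aF_eq_one fun l _ hl ↦ hTTi l (by omega),
    aF_mul_dF_eq_one fun l _ hl ↦ hTiT l (by omega)⟩
  exact SemiconjBy.units_inv_symm_left (a := u) (hT.semiconjBy_dF hs hi hN)

end IsBraidSequence

/-- The element `T i ⋯ T (N - 1) * C * T (N - 1) ⋯ T i`. The operators `D_i` arise in this way
from `C = D_n`. -/
def braidConj (T : ℕ → M) (N : ℕ) (C : M) (i : ℕ) : M :=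
  aF T i (N - i) * C * dF T i (N - i)

lemma braidConj_eq_mul_braidConj_succ_mul (C : M) (hi : i < N) :
    braidConj T N C i = T i * braidConj T N C (i + 1) * T i := by
  rw [braidConj, braidConj, show N - i = N - (i + 1) + 1 by omega, aF_succ, dF_succ]
  simp only [mul_assoc]

lemma IsBraidSequence.commute_braidConj (hT : IsBraidSequence T N) {C : M}
    (hC : ∀ k, k + 1 < N → Commute (T k) C) {j : ℕ} (hi : i < N) (hj : j ≤ N) (hji : j ≠ i)
    (hji' : j ≠ i + 1) : Commute (T i) (braidConj T N C j) := by
  rcases hji.lt_or_gt with h | h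
  · obtain ⟨k, rfl⟩ : ∃ k, i = k + 1 := ⟨i - 1, by omega⟩
    exact (((hT.semiconjBy_aF (i := k) (by omega) (by omega) (by omega)).mul_left
      (hC k hi).symm).mul_left (hT.semiconjBy_dF (by omega) (by omega) (by omega))).symm
  · have hcomm : ∀ l, j ≤ l → l < j + (N - j) → Commute (T i) (T l) :=
      fun l _ _ ↦ hT.commute (by omega) (by omega) (by omega)
    exact ((commute_aF hcomm).mul_right (hC i (by omega))).mul_right
      (commute_dF hcomm)

/-- The elements `T 0, …, T (N - 1)` and `X 0, …, X N` satisfy the relations of the affine braid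
monoid of type `GL_{N+1}` that involve some `T k`. Commutativity of the `X j` is not included. -/
structure IsAffineBraidSequence (T X : ℕ → M) (N : ℕ) : Prop extends IsBraidSequence T N where
  mul_mul : ∀ k < N, T k * X k * T k = X (k + 1)
  commute_X : ∀ k j, k < N → j ≤ N → j ≠ k → j ≠ k + 1 → Commute (T k) (X j)

namespace IsAffineBraidSequence

lemma X_mul_aF (h : IsAffineBraidSequence T X N) (hTiT : ∀ k < N, Ti k * T k = 1) {s len : ℕ}
    (hN : s + len ≤ N) : X s * aF T s len = aF Ti s len * X (s + len) := by
  induction len generalizing s with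
  | zero => simp [aF]
  | succ m ih =>
    have hX : X s * T s = Ti s * X (s + 1) := by
      rw [← h.mul_mul s (by omega), mul_assoc (T s), ← mul_assoc (Ti s), hTiT s (by omega), one_mul]
    rw [aF_succ, aF_succ, ← mul_assoc, hX, mul_assoc, ih (by omega), mul_assoc,
      show s + 1 + m = s + (m + 1) by omega]

lemma mul_X_mul_braidConj_mul (h : IsAffineBraidSequence T X N) {C : M}
    (hC : ∀ k, k + 1 < N → Commute (T k) C) {j : ℕ} (hi : i < N) (hj : j ≤ N) (hji : j ≠ i)
    (hji' : j ≠ i + 1) :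
    T i * (X i * braidConj T N C j) * T i = X (i + 1) * braidConj T N C j := by
  rw [← h.mul_mul i hi, mul_assoc, mul_assoc, ← (h.commute_braidConj hC hi hj hji hji').eq]
  simp only [mul_assoc]

lemma mul_X_mul_braidConj_succ_mul (h : IsAffineBraidSequence T X N) (C : M) {j : ℕ}
    (hi : i < N) (hj : j ≤ N) (hji : j ≠ i) (hji' : j ≠ i + 1) :
    T i * (X j * braidConj T N C (i + 1)) * T i = X j * braidConj T N C i := by
  rw [← mul_assoc, (h.commute_X i j hi hj hji hji').eq, braidConj_eq_mul_braidConj_succ_mul C hi]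
  simp only [mul_assoc]

lemma commute_X_mul_braidConj (h : IsAffineBraidSequence T X N) {C : M}
    (hC : ∀ k, k + 1 < N → Commute (T k) C) {j k : ℕ} (hi : i < N) (hj : j ≤ N) (hk : k ≤ N)
    (hji : j ≠ i) (hji' : j ≠ i + 1) (hki : k ≠ i) (hki' : k ≠ i + 1) :
    Commute (T i) (X j * braidConj T N C k) :=
  (h.commute_X i j hi hj hji hji').mul_right (h.commute_braidConj hC hi hk hki hki')

lemma mul_X_mul_braidConj_succ_mul_self {A : Type*} [Ring A] [Algebra R A]
    {T Ti X : ℕ → A} (h : IsAffineBraidSequence T X N) {c : R}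
    (hTi : ∀ k, Ti k = T k + c • (1 : A)) (hTTi : ∀ k < N, T k * Ti k = 1)
    (hTiT : ∀ k < N, Ti k * T k = 1) (C : A) (hi : i < N) :
    T i * (X i * braidConj T N C (i + 1)) * T i = X (i + 1) * braidConj T N C i
      + c • (aF Ti (i + 1) (N - (i + 1)) * (X N * C) * dF T i (N - i)) := by
  have hTX : T i * X i = X (i + 1) * Ti i := by
    rw [← h.mul_mul i hi, mul_assoc, hTTi i hi, mul_one]
  have hXaF := h.X_mul_aF (s := i + 1) (len := N - (i + 1)) hTiT (by omega)
  rw [show i + 1 + (N - (i + 1)) = N by omega] at hXaF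
  have hcorr : X (i + 1) * (braidConj T N C (i + 1) * T i)
      = aF Ti (i + 1) (N - (i + 1)) * (X N * C) * dF T i (N - i) := by
    rw [braidConj, show N - i = N - (i + 1) + 1 by omega, dF_succ]
    simp only [← mul_assoc, hXaF]
  rw [← hcorr, ← mul_assoc, hTX, hTi, braidConj_eq_mul_braidConj_succ_mul C hi]
  simp only [add_mul, mul_add, smul_mul_assoc, mul_smul_comm, one_mul, mul_assoc]

end IsAffineBraidSequence

end BraidSequences

section DemazureLusztig

variable {L : Type*} [CommRing L] [Algebra R L]

/-- The map `T` is the operator `p ↦ (a * s p + b * p) / d`, with the denominator cleared so that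
it makes sense over any ring in which `d` is regular. -/
def IsTwistedOperator (s : L →ₐ[R] L) (d a b : L) (T : L → L) : Prop :=
  ∀ p, d * T p = a * s p + b * p

namespace IsTwistedOperator

variable {s s₁ s₂ : L →ₐ[R] L} {d a b d₁ a₁ b₁ d₂ a₂ b₂ : L} {T T₁ T₂ : L → L}

lemma apply_mul_of_fixed (h : IsTwistedOperator s d a b T) (hd : IsRegular d) {u : L}
    (hu : s u = u) (p : L) : T (u * p) = u * T p := by
  have hup := h (u * p)
  rw [map_mul, hu] at hup
  exact hd.left (by linear_combination hup - u * h p)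

lemma apply_apply_comm (h₁ : IsTwistedOperator s₁ d₁ a₁ b₁ T₁)
    (h₂ : IsTwistedOperator s₂ d₂ a₂ b₂ T₂) (hd₁ : IsRegular d₁) (hd₂ : IsRegular d₂)
    (hs₁d : s₁ d₂ = d₂) (hs₁a : s₁ a₂ = a₂) (hs₁b : s₁ b₂ = b₂)
    (hs₂d : s₂ d₁ = d₁) (hs₂a : s₂ a₁ = a₁) (hs₂b : s₂ b₁ = b₁)
    (hs : s₁ * s₂ = s₂ * s₁) (p : L) : T₁ (T₂ p) = T₂ (T₁ p) := by
  have hsp : s₁ (s₂ p) = s₂ (s₁ p) := DFunLike.congr_fun hs p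
  have hs₁T₂ := congrArg s₁ (h₂ p)
  have hs₂T₁ := congrArg s₂ (h₁ p)
  simp only [map_mul, map_add, hs₁d, hs₁a, hs₁b, hs₂d, hs₂a, hs₂b] at hs₁T₂ hs₂T₁
  refine (hd₁.mul hd₂).left ?_
  linear_combination d₂ * h₁ (T₂ p) + a₁ * hs₁T₂ + b₁ * h₂ p - d₁ * h₂ (T₁ p) - a₂ * hs₂T₁
    - b₂ * h₁ p + a₁ * a₂ * hsp

lemma map_apply {L' : Type*} [CommRing L'] [Algebra R L'] {s' : L' →ₐ[R] L'} {d' a' b' : L'}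
    {T' : L' → L'} (h : IsTwistedOperator s d a b T) (h' : IsTwistedOperator s' d' a' b' T')
    (hd' : IsRegular d') (φ : L →ₐ[R] L') (hφd : φ d = d') (hφa : φ a = a') (hφb : φ b = b')
    (hφs : s'.comp φ = φ.comp s) (p : L) : T' (φ p) = φ (T p) := by
  have hsp : s' (φ p) = φ (s p) := DFunLike.congr_fun hφs p
  have hφT := congrArg φ (h p)
  simp only [map_mul, map_add, hφd, hφa, hφb] at hφT
  exact hd'.left (by linear_combination h' (φ p) - hφT + a' * hsp)

/-- The composite `T₁ T₂ T₁` has denominators `d₁`, `s₁ d₂` and `s₁ (s₂ d₁) = d₂`, up to sign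
the same as `T₂ T₁ T₂`. Clearing them turns the braid relation into a comparison of coefficients. -/
lemma mul_apply_apply_apply (h₁ : IsTwistedOperator s₁ d₁ a₁ b₁ T₁)
    (h₂ : IsTwistedOperator s₂ d₂ a₂ b₂ T₂) (hs₁d₁ : s₁ d₁ = -d₁) (hs₂d₁ : s₂ d₁ = s₁ d₂)
    (hs₁ : s₁ * s₁ = 1) (p : L) :
    d₁ ^ 2 * d₂ * s₁ d₂ * T₁ (T₂ (T₁ p))
      = d₁ * a₁ * s₁ a₂ * (s₁ (s₂ a₁) * s₁ (s₂ (s₁ p)) + s₁ (s₂ b₁) * s₁ (s₂ p))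
        - d₂ * a₁ * s₁ b₂ * (s₁ a₁ * p + s₁ b₁ * s₁ p)
        + d₁ * b₁ * a₂ * (s₂ a₁ * s₂ (s₁ p) + s₂ b₁ * s₂ p)
        + s₁ d₂ * b₁ * b₂ * (a₁ * s₁ p + b₁ * p) := by
  have hs₁s₁ (u : L) : s₁ (s₁ u) = u := DFunLike.congr_fun hs₁ u
  have hs₁T₂ := congrArg s₁ (h₂ (T₁ p))
  have hs₁T₁ := congrArg s₁ (h₁ p)
  have hs₂T₁ := congrArg s₂ (h₁ p)
  have hs₁s₂T₁ := congrArg s₁ hs₂T₁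
  simp only [map_mul, map_add, hs₁s₁, hs₁d₁, hs₂d₁] at hs₁T₂ hs₁T₁ hs₂T₁ hs₁s₂T₁
  linear_combination d₁ * d₂ * s₁ d₂ * h₁ (T₂ (T₁ p)) + d₁ * d₂ * a₁ * hs₁T₂
    + d₁ * a₁ * s₁ a₂ * hs₁s₂T₁ - d₂ * a₁ * s₁ b₂ * hs₁T₁ + d₁ * s₁ d₂ * b₁ * h₂ (T₁ p)
    + d₁ * b₁ * a₂ * hs₂T₁ + s₁ d₂ * b₁ * b₂ * h₁ p

end IsTwistedOperator

/-- The map `T` is the Demazure–Lusztig operator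
`p ↦ ((τ⁻¹ y - τ x) s(p) + (τ - τ⁻¹) y p) / (y - x)` attached to a reflection `s` that
exchanges `x` and `y`. -/
abbrev IsDemazureLusztig (τ : Rˣ) (s : L →ₐ[R] L) (x y : L) (T : L → L) : Prop :=
  IsTwistedOperator s (y - x) ((↑τ⁻¹ : R) • y - (τ : R) • x) (((τ : R) - ↑τ⁻¹) • y) T

namespace IsDemazureLusztig

variable {τ : Rˣ} {s s₁ s₂ : L →ₐ[R] L} {x y z : L} {T T₁ T₂ : L → L}

lemma apply_mul_left (h : IsDemazureLusztig τ s x y T) (hxy : IsRegular (y - x)) (hx : s x = y)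
    (p : L) : T (x * p) = y * (T p + ((↑τ⁻¹ : R) - τ) • p) := by
  have hxp := h (x * p)
  have hp := h p
  rw [map_mul, hx] at hxp
  simp only [Algebra.smul_def, map_sub] at hxp hp ⊢
  exact hxy.left (by linear_combination hxp - y * hp)

lemma apply_apply (h : IsDemazureLusztig τ s x y T) (hxy : IsRegular (y - x)) (hx : s x = y)
    (hy : s y = x) (hs : s * s = 1) (p : L) : T (T p) = p + ((τ : R) - ↑τ⁻¹) • T p := by
  have hττ : algebraMap R L τ * algebraMap R L ↑τ⁻¹ = 1 := by simp [← map_mul]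
  have hssp : s (s p) = p := DFunLike.congr_fun hs p
  have hTp := h (T p)
  have hp := h p
  have hsT := congrArg s hp
  simp only [Algebra.smul_def, map_mul, map_add, map_sub, AlgHom.commutes, hx, hy, hssp]
    at hTp hp hsT ⊢
  generalize algebraMap R L τ = t at *
  generalize algebraMap R L ↑τ⁻¹ = t' at *
  refine (hxy.mul hxy).left ?_
  linear_combination (y - x) * hTp - (t' * y - t * x) * hsT + (t - t') * x * hp
     + (y - x) ^ 2 * p * hττ

lemma braid (h₁ : IsDemazureLusztig τ s₁ x y T₁) (h₂ : IsDemazureLusztig τ s₂ y z T₂)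
    (hxy : IsRegular (y - x)) (hyz : IsRegular (z - y)) (hxz : IsRegular (z - x))
    (hs₁x : s₁ x = y) (hs₁y : s₁ y = x) (hs₁z : s₁ z = z)
    (hs₂x : s₂ x = x) (hs₂y : s₂ y = z) (hs₂z : s₂ z = y)
    (hs₁ : s₁ * s₁ = 1) (hs₂ : s₂ * s₂ = 1) (hs : s₁ * s₂ * s₁ = s₂ * s₁ * s₂) (p : L) :
    T₁ (T₂ (T₁ p)) = T₂ (T₁ (T₂ p)) := by
  have hsp : s₁ (s₂ (s₁ p)) = s₂ (s₁ (s₂ p)) := DFunLike.congr_fun hs p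
  have h₁₂₁ := h₁.mul_apply_apply_apply h₂ (by simp [hs₁x, hs₁y])
    (by simp [hs₁y, hs₁z, hs₂x, hs₂y]) hs₁ p
  have h₂₁₂ := h₂.mul_apply_apply_apply h₁ (by simp [hs₂y, hs₂z])
    (by simp [hs₁y, hs₁z, hs₂x, hs₂y]) hs₂ p
  simp only [Algebra.smul_def, map_mul, map_sub, AlgHom.commutes, hs₁x, hs₁y, hs₁z, hs₂x, hs₂y,
    hs₂z, hsp] at h₁₂₁ h₂₁₂
  refine ((((hxy.mul hxy).mul (hyz.mul hyz)).mul hxz)).left ?_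
  linear_combination (z - y) * h₁₂₁ - (y - x) * h₂₁₂

end IsDemazureLusztig

end DemazureLusztig

lemma isRegular_single_sub_single {S G : Type*} [CommRing S] [AddCommGroup G]
    [IsAddTorsionFree G] {a b : G} (hab : a ≠ b) :
    IsRegular (AddMonoidAlgebra.single a (1 : S) - AddMonoidAlgebra.single b 1) := by
  refine (Commute.isRegular_iff (Commute.all _)).2 <|
    isLeftRegular_of_non_zero_divisor _ fun p hp ↦ ?_
  -- A nonzero coefficient would propagate along an infinite arithmetic progression in the support.
  have hstep (u : G) : p.coeff (u + (a - b)) = p.coeff u := by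
    have hcoeff := congrArg (fun r ↦ r.coeff (u + a)) hp
    simp only [sub_mul, AddMonoidAlgebra.coeff_sub, Finsupp.sub_apply,
      AddMonoidAlgebra.coeff_single_mul_apply, AddMonoidAlgebra.coeff_zero, Finsupp.zero_apply,
      one_mul] at hcoeff
    rw [show -a + (u + a) = u by abel, show -b + (u + a) = u + (a - b) by abel] at hcoeff
    exact (sub_eq_zero.1 hcoeff).symm
  have hprogression (u : G) (k : ℕ) : p.coeff (u + k • (a - b)) = p.coeff u := by
    induction k with
    | zero => simp
    | succ k ih => rw [succ_nsmul, ← add_assoc, hstep, ih]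
  ext u
  by_contra hu
  have hinj : Function.Injective fun k : ℕ ↦ u + k • (a - b) :=
    (add_right_injective u).comp <| injective_nsmul_iff_not_isOfFinAddOrder.2 <|
      not_isOfFinAddOrder_of_isAddTorsionFree (sub_ne_zero.2 hab)
  refine Set.infinite_of_injective_forall_mem hinj (fun k ↦ ?_) p.coeff.hasFiniteSupport
  simpa [hprogression] using hu

section LaurentPolynomials

lemma linearMap_ext_mono {V : Type*} [AddCommMonoid V] [Module R V] {f g : Laur R n →ₗ[R] V}
    (h : ∀ a, f (mono a 1) = g (mono a 1)) : f = g :=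
  AddMonoidAlgebra.lhom_ext' fun a ↦ LinearMap.ext_ring (h a)

lemma algHom_ext_mono {A : Type*} [Semiring A] [Algebra R A] {f g : Laur R n →ₐ[R] A}
    (h : ∀ a, f (mono a 1) = g (mono a 1)) : f = g :=
  AlgHom.toLinearMap_injective (linearMap_ext_mono h)

variable (R n) in
/-- The monoid homomorphism sending a permutation `w` to the algebra endomorphism of the Laurent
polynomial ring given by `X_i ↦ X_{w(i)}`. -/
def permuteVars : Equiv.Perm (Fin n) →* (Laur R n →ₐ[R] Laur R n) where
  toFun w := AddMonoidAlgebra.mapDomainAlgHom R R (Finsupp.domCongr w).toAddMonoidHom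
  map_one' := algHom_ext_mono fun a ↦ by
    simp [mono, Finsupp.domCongr, Equiv.Perm.one_def, Finsupp.equivMapDomain_refl]
  map_mul' w v := algHom_ext_mono fun a ↦ by
    simp [mono, Finsupp.domCongr, Equiv.Perm.mul_def, Finsupp.equivMapDomain_trans]

lemma permuteVars_mono (w : Equiv.Perm (Fin n)) (a : Fin n →₀ ℤ) (c : R) :
    permuteVars R n w (mono a c) = mono (Finsupp.equivMapDomain w a) c := by
  simp [permuteVars, mono, Finsupp.domCongr]

/-- The algebra endomorphism of the Laurent polynomial ring given by `X_i ↦ q X_i`, fixing the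
other variables. -/
def dilateVar (q : Rˣ) (i : Fin n) : Laur R n →ₐ[R] Laur R n :=
  AddMonoidAlgebra.lift R (Laur R n) (Fin n →₀ ℤ)
    { toFun a := mono a.toAdd ((q ^ a.toAdd i : Rˣ) : R)
      map_one' := by simp [mono, AddMonoidAlgebra.one_def]
      map_mul' a b := by simp [mono, AddMonoidAlgebra.single_mul_single, zpow_add] }

lemma dilateVar_mono (q : Rˣ) (i : Fin n) (a : Fin n →₀ ℤ) (c : R) :
    dilateVar q i (mono a c) = ((q ^ a i : Rˣ) : R) • mono a c := by
  simp [dilateVar, mono, mul_comm]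

lemma permuteVars_Xel (w : Equiv.Perm (Fin n)) (i : Fin n) :
    permuteVars R n w (Xel i) = Xel (w i) := by
  rw [Xel, permuteVars_mono, Finsupp.equivMapDomain_single, Xel]

lemma dilateVar_Xel_of_ne (q : Rˣ) {i j : Fin n} (h : j ≠ i) :
    dilateVar q i (Xel j : Laur R n) = Xel j := by
  rw [Xel, dilateVar_mono, Finsupp.single_eq_of_ne h.symm, zpow_zero, Units.val_one, one_smul]

lemma permuteVars_mul_dilateVar (w : Equiv.Perm (Fin n)) (q : Rˣ) (i : Fin n) :
    permuteVars R n w * dilateVar q i = dilateVar q (w i) * permuteVars R n w := by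
  refine algHom_ext_mono fun a ↦ ?_
  rw [AlgHom.mul_apply, AlgHom.mul_apply, dilateVar_mono, map_smul, permuteVars_mono,
    dilateVar_mono, Finsupp.equivMapDomain_apply, Equiv.symm_apply_apply]

lemma isRegular_Xel_sub_Xel {i j : Fin n} (h : i ≠ j) :
    IsRegular (Xel i - Xel j : Laur R n) :=
  isRegular_single_sub_single fun hij ↦ h (Finsupp.single_left_injective one_ne_zero hij)

lemma Xel_mul_XinvEl (i : Fin n) : (Xel i * XinvEl i : Laur R n) = 1 := by
  simp [Xel, XinvEl, mono, AddMonoidAlgebra.single_mul_single,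
    AddMonoidAlgebra.one_def]

/-- The algebra endomorphism `π⁻¹`, that is `X_1 ↦ q X_n` and `X_i ↦ X_{i-1}` for `i > 1` in the
`1`-based indexing of the variables. -/
def cyclicShift [NeZero n] (q : Rˣ) : Laur R n →ₐ[R] Laur R n :=
  permuteVars R n (finRotate n)⁻¹ * dilateVar q 0

lemma cyclicShift_mono [NeZero n] (q : Rˣ) (a : Fin n →₀ ℤ) (c : R) :
    cyclicShift q (mono a c)
      = ((q ^ a 0 : Rˣ) : R) • mono (Finsupp.equivMapDomain (finRotate n).symm a) c := by
  rw [cyclicShift, AlgHom.mul_apply, dilateVar_mono, map_smul, permuteVars_mono]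
  rfl

lemma cyclicShift_Xel_finRotate [NeZero n] (q : Rˣ) {i : Fin n} (hi : finRotate n i ≠ 0) :
    cyclicShift q (Xel (finRotate n i) : Laur R n) = Xel i := by
  rw [cyclicShift, AlgHom.mul_apply, dilateVar_Xel_of_ne q hi, permuteVars_Xel, Equiv.Perm.inv_def,
    Equiv.symm_apply_apply]

lemma permuteVars_conj_mul_cyclicShift [NeZero n] (q : Rˣ) {w : Equiv.Perm (Fin n)}
    (hw : w 0 = 0) :
    permuteVars R n ((finRotate n)⁻¹ * w * finRotate n) * cyclicShift q
      = cyclicShift q * permuteVars R n w := by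
  have hcomm := permuteVars_mul_dilateVar w q 0
  rw [hw] at hcomm
  rw [cyclicShift, ← mul_assoc, ← map_mul, mul_inv_cancel_right, map_mul, mul_assoc, hcomm,
    mul_assoc]

end LaurentPolynomials

section DemazureLusztigOfVariables

/-- The map `T` is the Demazure–Lusztig operator on Laurent polynomials attached to the
transposition of `X_i` and `X_j`. -/
abbrev IsDemazureLusztigAt (τ : Rˣ) (i j : Fin n) (T : Laur R n → Laur R n) : Prop :=
  IsDemazureLusztig τ (permuteVars R n (Equiv.swap i j)) (Xel i) (Xel j) T

namespace IsDemazureLusztigAt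

variable {τ : Rˣ} {i j k l : Fin n} {T T₁ T₂ : Laur R n → Laur R n}

lemma apply_apply (h : IsDemazureLusztigAt τ i j T) (hij : i ≠ j) (p : Laur R n) :
    T (T p) = p + ((τ : R) - ↑τ⁻¹) • T p :=
  IsDemazureLusztig.apply_apply h (isRegular_Xel_sub_Xel hij.symm)
    (by rw [permuteVars_Xel, Equiv.swap_apply_left])
    (by rw [permuteVars_Xel, Equiv.swap_apply_right])
    (by rw [← map_mul, Equiv.swap_mul_self, map_one]) p

lemma apply_Xel_mul_apply (h : IsDemazureLusztigAt τ i j T) (hij : i ≠ j) (p : Laur R n) :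
    T (Xel i * T p) = Xel j * p := by
  rw [h.apply_mul_left (isRegular_Xel_sub_Xel hij.symm)
    (by rw [permuteVars_Xel, Equiv.swap_apply_left]), h.apply_apply hij, add_assoc, ← add_smul,
    sub_add_sub_cancel, sub_self, zero_smul, add_zero]

lemma apply_Xel_mul_of_ne (h : IsDemazureLusztigAt τ i j T) (hij : i ≠ j) (hki : k ≠ i)
    (hkj : k ≠ j) (p : Laur R n) : T (Xel k * p) = Xel k * T p :=
  h.apply_mul_of_fixed (isRegular_Xel_sub_Xel hij.symm)
    (by rw [permuteVars_Xel, Equiv.swap_apply_of_ne_of_ne hki hkj]) p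

lemma braid (h₁ : IsDemazureLusztigAt τ i j T₁) (h₂ : IsDemazureLusztigAt τ j k T₂)
    (hij : i ≠ j) (hjk : j ≠ k) (hik : i ≠ k) (p : Laur R n) :
    T₁ (T₂ (T₁ p)) = T₂ (T₁ (T₂ p)) := by
  have hswap : Equiv.swap i j * Equiv.swap j k * Equiv.swap i j
      = Equiv.swap j k * Equiv.swap i j * Equiv.swap j k := by
    rw [Equiv.swap_mul_swap_mul_swap hij hik, Equiv.swap_comm i j, Equiv.swap_comm j k,
      Equiv.swap_mul_swap_mul_swap hjk.symm hik.symm, Equiv.swap_comm]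
  refine IsDemazureLusztig.braid h₁ h₂ (isRegular_Xel_sub_Xel hij.symm)
    (isRegular_Xel_sub_Xel hjk.symm) (isRegular_Xel_sub_Xel hik.symm)
    ?_ ?_ ?_ ?_ ?_ ?_ ?_ ?_ ?_ p
  · rw [permuteVars_Xel, Equiv.swap_apply_left]
  · rw [permuteVars_Xel, Equiv.swap_apply_right]
  · rw [permuteVars_Xel, Equiv.swap_apply_of_ne_of_ne hik.symm hjk.symm]
  · rw [permuteVars_Xel, Equiv.swap_apply_of_ne_of_ne hij hik]
  · rw [permuteVars_Xel, Equiv.swap_apply_left]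
  · rw [permuteVars_Xel, Equiv.swap_apply_right]
  · rw [← map_mul, Equiv.swap_mul_self, map_one]
  · rw [← map_mul, Equiv.swap_mul_self, map_one]
  · simp only [← map_mul, hswap]

lemma apply_apply_comm (h₁ : IsDemazureLusztigAt τ i j T₁) (h₂ : IsDemazureLusztigAt τ k l T₂)
    (hij : i ≠ j) (hkl : k ≠ l) (hik : i ≠ k) (hil : i ≠ l) (hjk : j ≠ k) (hjl : j ≠ l)
    (p : Laur R n) : T₁ (T₂ p) = T₂ (T₁ p) := by
  have hcomm : Equiv.swap i j * Equiv.swap k l = Equiv.swap k l * Equiv.swap i j :=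
    (Equiv.Perm.disjoint_swap_swap (by simp [*])).commute.eq
  have hk := Equiv.swap_apply_of_ne_of_ne hik.symm hjk.symm
  have hl := Equiv.swap_apply_of_ne_of_ne hil.symm hjl.symm
  have hi := Equiv.swap_apply_of_ne_of_ne hik hil
  have hj := Equiv.swap_apply_of_ne_of_ne hjk hjl
  refine IsTwistedOperator.apply_apply_comm h₁ h₂ (isRegular_Xel_sub_Xel hij.symm)
    (isRegular_Xel_sub_Xel hkl.symm) ?_ ?_ ?_ ?_ ?_ ?_ (by rw [← map_mul, hcomm, map_mul]) p <;>
  simp only [map_sub, map_smul, permuteVars_Xel, hi, hj, hk, hl]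

lemma apply_cyclicShift [NeZero n] (h₁ : IsDemazureLusztigAt τ (finRotate n i) (finRotate n j) T₁)
    (h₂ : IsDemazureLusztigAt τ i j T₂) (hij : i ≠ j) (hi : finRotate n i ≠ 0)
    (hj : finRotate n j ≠ 0) (q : Rˣ) (p : Laur R n) :
    T₂ (cyclicShift q p) = cyclicShift q (T₁ p) := by
  have hXi := cyclicShift_Xel_finRotate (R := R) q hi
  have hXj := cyclicShift_Xel_finRotate (R := R) q hj
  have hconj : (finRotate n)⁻¹ * Equiv.swap (finRotate n i) (finRotate n j) * finRotate n
      = Equiv.swap i j := by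
    rw [mul_assoc, ← Equiv.mul_swap_eq_swap_mul, inv_mul_cancel_left]
  refine IsTwistedOperator.map_apply h₁ h₂ (isRegular_Xel_sub_Xel hij.symm) (cyclicShift q)
    ?_ ?_ ?_ ?_ p
  · rw [map_sub, hXi, hXj]
  · rw [map_sub, map_smul, map_smul, hXi, hXj]
  · rw [map_smul, hXj]
  · rw [← hconj]
    exact permuteVars_conj_mul_cyclicShift q (Equiv.swap_apply_of_ne_of_ne hi.symm hj.symm)

end IsDemazureLusztigAt

end DemazureLusztigOfVariables

section PolynomialRepresentation

lemma XOp_mul_XinvOp (i : ℕ) : (XOp i * XinvOp i : Module.End R (Laur R n)) = 1 := by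
  by_cases hi : i < n
  · refine LinearMap.ext fun p ↦ ?_
    simp only [XOp, XinvOp, hi, mulOp, dite_true, Module.End.mul_apply, LinearMap.mulLeft_apply,
      ← mul_assoc, Xel_mul_XinvEl, one_mul, Module.End.one_apply]
  · simp [XOp, XinvOp, hi]

lemma XinvOp_mul_XOp (i : ℕ) : (XinvOp i * XOp i : Module.End R (Laur R n)) = 1 := by
  by_cases hi : i < n
  · refine LinearMap.ext fun p ↦ ?_
    have hX : (XinvEl ⟨i, hi⟩ * Xel ⟨i, hi⟩ : Laur R n) = 1 := by rw [mul_comm, Xel_mul_XinvEl]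
    simp only [XOp, XinvOp, hi, mulOp, dite_true, Module.End.mul_apply, LinearMap.mulLeft_apply,
      ← mul_assoc, hX, one_mul, Module.End.one_apply]
  · simp [XOp, XinvOp, hi]

/-- The operators `T k`, for `k + 1 < n`, are the Demazure–Lusztig operators attached to the
transpositions of adjacent variables. The remaining values of `T` are unconstrained. -/
def IsDemazureLusztigSequence (τ : Rˣ) (T : ℕ → Module.End R (Laur R n)) : Prop :=
  ∀ (k : ℕ) (hk : k + 1 < n), IsDemazureLusztigAt τ ⟨k, Nat.lt_of_succ_lt hk⟩ ⟨k + 1, hk⟩ (T k)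

namespace IsDemazureLusztigSequence

variable {τ : Rˣ} {T Ti : ℕ → Module.End R (Laur R n)} {k : ℕ}

lemma mul_self (hT : IsDemazureLusztigSequence τ T) (hk : k + 1 < n) :
    T k * T k = 1 + ((τ : R) - ↑τ⁻¹) • T k :=
  LinearMap.ext fun p ↦ (hT k hk).apply_apply (by simp) p

lemma mul_inverse (hT : IsDemazureLusztigSequence τ T)
    (hTi : ∀ k, Ti k = T k + ((↑τ⁻¹ : R) - τ) • (1 : Module.End R (Laur R n)))
    (hk : k + 1 < n) : T k * Ti k = 1 := by
  rw [hTi, mul_add, hT.mul_self hk, mul_smul_comm, mul_one]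
  module

lemma inverse_mul (hT : IsDemazureLusztigSequence τ T)
    (hTi : ∀ k, Ti k = T k + ((↑τ⁻¹ : R) - τ) • (1 : Module.End R (Laur R n)))
    (hk : k + 1 < n) : Ti k * T k = 1 := by
  rw [hTi, add_mul, hT.mul_self hk, smul_mul_assoc, one_mul]
  module

lemma isBraidSequence (hT : IsDemazureLusztigSequence τ T) : IsBraidSequence T (n - 1) where
  braid l hl := LinearMap.ext fun p ↦
    (hT l (by omega)).braid (hT (l + 1) (by omega)) (by simp) (by simp) (by simp; omega) p
  commute_of_lt l m hlm hm := LinearMap.ext fun p ↦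
    (hT l (by omega)).apply_apply_comm (hT m (by omega)) (by simp) (by simp)
      (by simp; omega) (by simp; omega) (by simp; omega) (by simp; omega) p

lemma isAffineBraidSequence (hT : IsDemazureLusztigSequence τ T) :
    IsAffineBraidSequence T XOp (n - 1) where
  toIsBraidSequence := hT.isBraidSequence
  mul_mul k hk := by
    have hk' : k + 1 < n := by omega
    refine LinearMap.ext fun p ↦ ?_
    simpa [XOp, hk', Nat.lt_of_succ_lt hk', mulOp] using
      (hT k hk').apply_Xel_mul_apply (by simp) p
  commute_X k j hk hj hjk hjk' := by
    have hj' : j < n := by omega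
    refine LinearMap.ext fun p ↦ ?_
    simpa [XOp, hj', mulOp] using (hT k (by omega)).apply_Xel_mul_of_ne (k := ⟨j, hj'⟩)
      (by simp) (by simpa) (by simpa) p

lemma mul_cyclicShift [NeZero n] (hT : IsDemazureLusztigSequence τ T) (q : Rˣ) (hk : k + 2 < n) :
    T k * (cyclicShift q).toLinearMap = (cyclicShift q).toLinearMap * T (k + 1) := by
  have hrot (l : ℕ) (hl : l + 1 < n) :
      finRotate n ⟨l, Nat.lt_of_succ_lt hl⟩ = ⟨l + 1, hl⟩ := by
    obtain ⟨m, rfl⟩ : ∃ m, n = m + 1 := ⟨n - 1, by omega⟩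
    exact finRotate_of_lt (by omega)
  have hrot_ne (l : ℕ) (hl : l + 1 < n) : finRotate n ⟨l, Nat.lt_of_succ_lt hl⟩ ≠ 0 := by
    rw [hrot l hl, ← Fin.val_ne_zero_iff]
    exact l.succ_ne_zero
  have hT₁ := hT (k + 1) hk
  rw [← hrot k (by omega), ← hrot (k + 1) hk] at hT₁
  exact LinearMap.ext fun p ↦ hT₁.apply_cyclicShift (hT k (by omega)) (by simp)
    (hrot_ne k (by omega)) (hrot_ne (k + 1) hk) q p

/-- Moving `T k` past `π⁻¹` raises its index, and moving it past the ascending product of the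
inverses lowers it again. -/
lemma commute_cyclicShift_mul_aF [NeZero n] (hT : IsDemazureLusztigSequence τ T)
    (hTi : ∀ k, Ti k = T k + ((↑τ⁻¹ : R) - τ) • (1 : Module.End R (Laur R n))) (q : Rˣ)
    (hk : k + 2 < n) : Commute (T k) ((cyclicShift q).toLinearMap * aF Ti 0 (n - 1)) := by
  have hshift : SemiconjBy (cyclicShift q).toLinearMap (T (k + 1)) (T k) :=
    (hT.mul_cyclicShift q hk).symm
  exact (hshift.mul_left <| hT.isBraidSequence.semiconjBy_aF_inverse
    (fun l hl ↦ hT.mul_inverse hTi (by omega)) (fun l hl ↦ hT.inverse_mul hTi (by omega))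
    (by omega) (by omega) (by omega)).symm

lemma commute_smul_XinvOp_mul_sub (hT : IsDemazureLusztigSequence τ T)
    {Yn Yn' : Module.End R (Laur R n)} (hY : Yn * Yn' = 1) (hY' : Yn' * Yn = 1) (κ : R)
    (hk : k + 2 < n) (hcomm : Commute (T k) Yn) :
    Commute (T k) (κ • (XinvOp (n - 1) * (Yn - Yn'))) := by
  have hX : Commute (T k) (XOp (n - 1)) :=
    hT.isAffineBraidSequence.commute_X k (n - 1) (by omega) (by omega) (by omega) (by omega)
  exact ((commute_of_mul_eq_one hX (XOp_mul_XinvOp _) (XinvOp_mul_XOp _)).mul_right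
    (hcomm.sub_right (commute_of_mul_eq_one hcomm hY hY'))).smul_right κ

end IsDemazureLusztigSequence

/-- Here `κ` plays the role of `(q - q⁻¹)⁻¹`. -/
theorem statement9_general
    (R : Type*) [CommRing R] (n : ℕ) [NeZero n] (q τ : Rˣ) (κ : R)
    (W : Equiv.Perm (Fin n) → Module.End R (Laur R n))
    (hW : ∀ (w : Equiv.Perm (Fin n)) (a : Fin n →₀ ℤ) (c : R),
      W w (mono a c) = mono (Finsupp.equivMapDomain w a) c)
    (T Ti : ℕ → Module.End R (Laur R n))
    (hT : ∀ (k : ℕ) (hk : k + 1 < n) (p : Laur R n),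
      (Xel ⟨k + 1, hk⟩ - Xel ⟨k, Nat.lt_of_succ_lt hk⟩) * T k p
        = ((↑τ⁻¹ : R) • Xel ⟨k + 1, hk⟩ - (τ : R) • Xel ⟨k, Nat.lt_of_succ_lt hk⟩)
            * W (Equiv.swap ⟨k, Nat.lt_of_succ_lt hk⟩ ⟨k + 1, hk⟩) p
          + ((τ : R) - ↑τ⁻¹) • (Xel ⟨k + 1, hk⟩ * p))
    (hTi : ∀ k, Ti k = T k + ((↑τ⁻¹ : R) - τ) • (1 : Module.End R (Laur R n)))
    (piInv : Module.End R (Laur R n))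
    (hpiInv : ∀ (a : Fin n →₀ ℤ) (c : R),
      piInv (mono a c)
        = ((q ^ a 0 : Rˣ) : R) • mono (Finsupp.equivMapDomain (finRotate n).symm a) c)
    (Y Yi : ℕ → Module.End R (Laur R n))
    (hY : ∀ i, Y i = aF T i (n - 1 - i) * piInv * aF Ti 0 i)
    (hYinv : ∀ i, i < n → Y i * Yi i = 1 ∧ Yi i * Y i = 1)
    (D : ℕ → Module.End R (Laur R n))
    (hD : ∀ i, D i = aF T i (n - 1 - i)
        * (κ • (XinvOp (n - 1) * (Y (n - 1) - Yi (n - 1)))) * dF T i (n - 1 - i))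
    (e : ℕ → ℕ → Module.End R (Laur R n))
    (he : ∀ i j, e i j = XOp i * D j) :
    (∀ i : ℕ, i + 1 < n →
      T i * e i (i + 1) * T i
        = e (i + 1) i + (((↑τ⁻¹ : R) - τ) * κ) •
            (aF Ti (i + 1) (n - 2 - i) * (Y (n - 1) - Yi (n - 1)) * dF T i (n - 1 - i))) ∧
    (∀ i j : ℕ, i + 1 < n → j < n → j ≠ i → j ≠ i + 1 →
      T i * e i j * T i = e (i + 1) j) ∧
    (∀ i j : ℕ, i + 1 < n → j < n → j ≠ i → j ≠ i + 1 →
      T i * e j (i + 1) * T i = e j i) ∧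
    (∀ i j k : ℕ, i + 1 < n → j < n → k < n → j ≠ i → j ≠ i + 1 → k ≠ i → k ≠ i + 1 →
      e j k * T i = T i * e j k) := by
  have hDL : IsDemazureLusztigSequence τ T := fun k hk p ↦ by
    have hWeq (w) : W w = (permuteVars R n w).toLinearMap :=
      linearMap_ext_mono fun a ↦ by simp [hW, permuteVars_mono]
    simpa [hWeq] using hT k hk p
  have hpi : piInv = (cyclicShift q).toLinearMap :=
    linearMap_ext_mono fun a ↦ by simp [hpiInv, cyclicShift_mono]
  have haff := hDL.isAffineBraidSequence
  set C := κ • (XinvOp (n - 1) * (Y (n - 1) - Yi (n - 1))) with hCdef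
  have hXC : XOp (n - 1) * C = κ • (Y (n - 1) - Yi (n - 1)) := by
    rw [hCdef, mul_smul_comm, ← mul_assoc, XOp_mul_XinvOp, one_mul]
  have hYn : Y (n - 1) = (cyclicShift q).toLinearMap * aF Ti 0 (n - 1) := by
    simp [hY, hpi, aF]
  have hC (k) (hk : k + 1 < n - 1) : Commute (T k) C := by
    obtain ⟨hYYi, hYiY⟩ := hYinv (n - 1) (by omega)
    refine hDL.commute_smul_XinvOp_mul_sub hYYi hYiY κ (by omega) ?_
    rw [hYn]
    exact hDL.commute_cyclicShift_mul_aF hTi q (by omega)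
  have he' (i j) : e i j = XOp i * braidConj T (n - 1) C j := by rw [he, hD, braidConj]
  simp only [he']
  refine ⟨fun i hi ↦ ?_, fun i j hi hj hji hji' ↦ ?_, fun i j hi hj hji hji' ↦ ?_,
    fun i j k hi hj hk hji hji' hki hki' ↦ ?_⟩
  · rw [haff.mul_X_mul_braidConj_succ_mul_self hTi (fun k hk ↦ hDL.mul_inverse hTi (by omega))
      (fun k hk ↦ hDL.inverse_mul hTi (by omega)) C (by omega), hXC,
      show n - 1 - (i + 1) = n - 2 - i by omega, mul_smul_comm, smul_mul_assoc, smul_smul]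
  · exact haff.mul_X_mul_braidConj_mul hC (by omega) (by omega) hji hji'
  · exact haff.mul_X_mul_braidConj_succ_mul C (by omega) (by omega) hji hji'
  · exact (haff.commute_X_mul_braidConj hC (by omega) (by omega) (by omega) hji hji' hki
      hki').eq.symm

end PolynomialRepresentation

/-- Relations for moving `T_i` through the elements `e_{jk}`
(indices `0`-based: the paper's conditions `i ≠ n`, `j ∉ {i, i+1}`, `k ∉ {j, i, i+1}`
become `i + 1 < n`, etc.). -/
theorem statement9
    (F : Type*) [Field F] (n : ℕ) [NeZero n]
    (q τ : F) (hq : q ≠ 0) (hqroot : ∀ m : ℕ, m ≠ 0 → q ^ m ≠ 1) (hτ : τ ≠ 0)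
    -- the action of the symmetric group permuting the variables
    (W : Equiv.Perm (Fin n) → Module.End F (Laur F n))
    (hW : ∀ (w : Equiv.Perm (Fin n)) (a : Fin n →₀ ℤ) (c : F),
      W w (mono a c) = mono (Finsupp.equivMapDomain w a) c)
    -- the Demazure–Lusztig operators `T_k` and their inverses `Ti k = T k + τ⁻¹ - τ`
    (T Ti : ℕ → Module.End F (Laur F n))
    (hT : ∀ (k : ℕ) (hk : k + 1 < n) (p : Laur F n),
      (Xel ⟨k + 1, hk⟩ - Xel ⟨k, Nat.lt_of_succ_lt hk⟩) * T k p
        = (τ⁻¹ • Xel ⟨k + 1, hk⟩ - τ • Xel ⟨k, Nat.lt_of_succ_lt hk⟩)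
            * W (Equiv.swap ⟨k, Nat.lt_of_succ_lt hk⟩ ⟨k + 1, hk⟩) p
          + (τ - τ⁻¹) • (Xel ⟨k + 1, hk⟩ * p))
    (hTi : ∀ k, Ti k = T k + (τ⁻¹ - τ) • (1 : Module.End F (Laur F n)))
    (hTinv : ∀ k, k + 1 < n → T k * Ti k = 1 ∧ Ti k * T k = 1)
    -- the operator `π⁻¹`
    (piInv : Module.End F (Laur F n))
    (hpiInv : ∀ (a : Fin n →₀ ℤ) (c : F),
      piInv (mono a c)
        = q ^ (a 0) • mono (Finsupp.equivMapDomain (finRotate n).symm a) c)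
    -- the operators `Y_i = T_i ⋯ T_{n-1} ⬝ π⁻¹ ⬝ T_1⁻¹ ⋯ T_{i-1}⁻¹` and their inverses
    (Y Yi : ℕ → Module.End F (Laur F n))
    (hY : ∀ i, Y i = aF T i (n - 1 - i) * piInv * aF Ti 0 i)
    (hYinv : ∀ i, i < n → Y i * Yi i = 1 ∧ Yi i * Y i = 1)
    -- the `q`-Dunkl-type operators `D_i`
    (D : ℕ → Module.End F (Laur F n))
    (hD : ∀ i, D i = aF T i (n - 1 - i)
        * ((q - q⁻¹)⁻¹ • (XinvOp (n - 1) * (Y (n - 1) - Yi (n - 1))))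
        * dF T i (n - 1 - i))
    -- the operators `e_{ij} = X_i · D_j`
    (e : ℕ → ℕ → Module.End F (Laur F n))
    (he : ∀ i j, e i j = XOp i * D j)
    :
    (∀ i : ℕ, (hi : i + 1 < n) →
      T i * e i (i + 1) * T i
        = e (i + 1) i + ((τ⁻¹ - τ) * (q - q⁻¹)⁻¹) •
            (aF Ti (i + 1) (n - 2 - i) * (Y (n - 1) - Yi (n - 1)) * dF T i (n - 1 - i))) ∧
    (∀ i j : ℕ, i + 1 < n → j < n → j ≠ i → j ≠ i + 1 →
      T i * e i j * T i = e (i + 1) j) ∧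
    (∀ i j : ℕ, i + 1 < n → j < n → j ≠ i → j ≠ i + 1 →
      T i * e j (i + 1) * T i = e j i) ∧
    (∀ i j k : ℕ, i + 1 < n → j < n → k < n → j ≠ i → j ≠ i + 1 → k ≠ i → k ≠ i + 1 → k ≠ j →
      e j k * T i = T i * e j k) := by
  obtain ⟨h₁, h₂, h₃, h₄⟩ := statement9_general F n (Units.mk0 q hq) (Units.mk0 τ hτ) (q - q⁻¹)⁻¹
    W hW T Ti (by simpa using hT) (by simpa using hTi) piInv (by simpa using hpiInv) Y Yi hY hYinv
    D hD e he
  exact ⟨by simpa using h₁, h₂, h₃, fun i j k hi hj hk hji hji' hki hki' _ ↦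
    h₄ i j k hi hj hk hji hji' hki hki'⟩
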